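/- Let R be a commutative ring, n ≥ 1, and let (L_i)_{i∈ℤ} be a complete periodic lattice chain in R((u))^n. Then there exist f₁,…,f_m ∈ R generating the unit ideal and, for each j, an element g_j ∈ GL_n(R_{f_j}((u))) such that for every i ∈ ℤ the R_{f_j}[[u]]-submodule of R_{f_j}((u))^n generated by the image of L_i under the coefficientwise localization map equals g_j·Λ̃_i, where (Λ̃_i)_{i∈ℤ} denotes the standard lattice chain over R_{f_j}. Moreover, the stabilizer I(R) = {g ∈ GL_n(R((u))) : g·Λ̃_i = Λ̃_i for all i ∈ ℤ} equals the preimage of the subgroup of upper triangular invertible matrices under the reduction map GL_n(R[[u]]) → GL_n(R), u ↦ 0. -/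

import Mathlib

noncomputable section
namespace Pap

variable (R : Type*) [CommRing R]

/-- `u^m` as a Laurent series. -/
def U (m : ℤ) : LaurentSeries R := HahnSeries.single m 1

/-- `R[[u]]` as a `R[[u]]`-submodule of `R((u))`. -/
def psRange : Submodule (PowerSeries R) (LaurentSeries R) :=
  LinearMap.range (Algebra.linearMap (PowerSeries R) (LaurentSeries R))

variable (n : ℕ)

/-- `R((u))^n`. -/
abbrev V := Fin n → LaurentSeries R

instance (priority := 10000) : AddCommGroup (V R n) := Pi.addCommGroup
instance (priority := 10000) : Module (PowerSeries R) (V R n) := Pi.module _ _ _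
instance (priority := 10000) : Module (LaurentSeries R) (V R n) := Pi.module _ _ _

/-- Multiplication by a Laurent series, as an `R[[u]]`-linear endomorphism of `R((u))^n`. -/
def smulV (a : LaurentSeries R) : V R n →ₗ[PowerSeries R] V R n where
  toFun x := a • x
  map_add' x y := smul_add a x y
  map_smul' c x := by
    funext i
    simp only [Pi.smul_apply, RingHom.id_apply, smul_eq_mul]
    simp only [Algebra.smul_def]
    ring

/-- Image of a submodule under multiplication by a Laurent series. -/
def scaleL (a : LaurentSeries R) (L : Submodule (PowerSeries R) (V R n)) :
    Submodule (PowerSeries R) (V R n) := L.map (smulV R n a)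

/-- The standard lattice `R[[u]]^n`. -/
def stdLat : Submodule (PowerSeries R) (V R n) := Submodule.pi Set.univ fun _ => psRange R

/-- The quotient `B/(A ∩ B)`; for `A ≤ B` this is `B/A`. -/
abbrev subQuot (A B : Submodule (PowerSeries R) (V R n)) :=
  B ⧸ (A.comap B.subtype)

/-- A lattice in `R((u))^n`. -/
def IsLattice (L : Submodule (PowerSeries R) (V R n)) : Prop :=
  ∃ N : ℕ, scaleL R n (U R N) (stdLat R n) ≤ L ∧ L ≤ scaleL R n (U R (-(N : ℤ))) (stdLat R n) ∧
    Module.Finite R (RestrictScalars R (PowerSeries R)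
      (subQuot R n L (scaleL R n (U R (-(N : ℤ))) (stdLat R n)))) ∧
    Module.Projective R (RestrictScalars R (PowerSeries R)
      (subQuot R n L (scaleL R n (U R (-(N : ℤ))) (stdLat R n))))

/-- Rank one finite locally free module. -/
def RankOne (A : Type*) [CommRing A] (Q : Type*) [AddCommGroup Q] [Module A Q] : Prop :=
  Module.Finite A Q ∧ Module.Projective A Q ∧
    ∀ (P : Ideal A) [P.IsPrime],
      Module.finrank (Localization P.primeCompl) (LocalizedModule P.primeCompl Q) = 1

/-- Exponent of `u` bounding the `t`-th coordinate of the `j`-th standard lattice. -/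
def dex (j : ℤ) (t : Fin n) : ℤ := (j - ((t : ℤ) + 1)) / n + 1

/-- The standard lattice chain `Λ̃_j`, `j ∈ ℤ`. -/
def stdChain (j : ℤ) : Submodule (PowerSeries R) (V R n) :=
  Submodule.span (PowerSeries R)
    (Set.range fun t : Fin n =>
      (fun s => if s = t then U R (-(dex n j t)) else 0 : V R n))

/-- A complete periodic lattice chain in `R((u))^n`. -/
def IsLatticeChain (L : ℤ → Submodule (PowerSeries R) (V R n)) : Prop :=
  (∀ i, IsLattice R n (L i)) ∧ (∀ i, L i ≤ L (i + 1)) ∧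
    (∀ i, @RankOne R _ (RestrictScalars R (PowerSeries R) (subQuot R n (L i) (L (i + 1)))) _
      (RestrictScalars.module R (PowerSeries R) (subQuot R n (L i) (L (i + 1))))) ∧
    (∀ i, L ((n : ℤ) + i) = scaleL R n (U R (-1)) (L i))

/-- The action of an invertible matrix over `R((u))` on `R[[u]]`-submodules of `R((u))^n`. -/
def glLat (g : GL (Fin n) (LaurentSeries R)) (L : Submodule (PowerSeries R) (V R n)) :
    Submodule (PowerSeries R) (V R n) :=
  L.map ((Matrix.mulVecLin (g : Matrix (Fin n) (Fin n) (LaurentSeries R))).restrictScalars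
    (PowerSeries R))

/-- Coefficientwise map of Laurent series along a ring map. -/
def lsMap {S : Type*} [CommRing S] (f : R →+* S) (x : LaurentSeries R) : LaurentSeries S where
  coeff g := f (x.coeff g)
  isPWO_support' := x.isPWO_support'.mono (fun g hg => by
    simp only [Function.mem_support] at hg ⊢
    intro h; exact hg (by rw [h, map_zero]))

end Pap
end

/-!
The quotients `L (t + 1) / L t`, being of rank one, are each generated by one element after
inverting suitable `f ∈ R`, and the admissible `f` generate the unit ideal. Over such an `R_f`, lift
generators of the `n` quotients with `0 ≤ t < n` and extend them to `w j ∈ L (j + 1)`, `j ∈ ℤ`, by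
`w (j + n) = u⁻¹ w j`. Climbing from `L (i - n) = u L i` to `L i` shows that the `n` consecutive
vectors `w j`, `i - n ≤ j < i`, generate `L i` modulo `u L i`. A lattice is finitely generated over
`R[[u]]` because its quotient is finitely presented over `R`, and `u` lies in the Jacobson radical
of `R[[u]]`, so by Nakayama these vectors generate `L i`. For each `i` they are the vectors
`u w 0, …, u w (n - 1)` up to powers of `u`, with the exponents that describe the standard chain;
hence one matrix `g`, with these columns, works for all `i`.

A matrix `g` maps every `Λ̃ j` into itself iff each entry `g s t` is divisible by
`u ^ (dex n j t - dex n j s)` for all `j`. The largest of these exponents is attained at `j = s` and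
is `1` if `t < s` and `0` otherwise, so the condition says that `g` is integral and upper triangular
modulo `u`. For the stabilizer it has to hold for `g` and `g⁻¹`, and the inverse of an invertible
upper triangular matrix is upper triangular.
-/

namespace Pap

section Algebra

open PowerSeries (X)

/-- `v` generates the module `Q` after inverting `f`, with `f` itself as a common denominator for
all elements of `Q`. -/
def GeneratesAway {R Q : Type*} [CommRing R] [AddCommGroup Q] [Module R Q] (f : R) (v : Q) :
    Prop :=
  ∀ x : Q, f • x ∈ Submodule.span R {v}

variable {R : Type*} [CommRing R]

lemma fg_of_finite_quotient {A B : Type*} [CommRing A] [Algebra R A] [AddCommGroup B] [Module R B]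
    [Module A B] [IsScalarTower R A B] {N L : Submodule A B} (hNL : N ≤ L) (hN : N.FG)
    [Module.Finite R (B ⧸ N)] [Module.FinitePresentation R (B ⧸ L)] : L.FG := by
  have hker : (LinearMap.ker ((Submodule.factor hNL).restrictScalars R)).FG :=
    Module.FinitePresentation.fg_ker _ (Submodule.factor_surjective hNL)
  refine Submodule.fg_of_fg_map_of_fg_inf_ker N.mkQ ?_ ?_
  · have hmap : LinearMap.ker (Submodule.factor hNL) = L.map N.mkQ := by
      rw [Submodule.factor, Submodule.ker_mapQ, Submodule.comap_id]
    rw [← hmap]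
    refine Submodule.FG.of_restrictScalars R ?_
    exact hker
  · rwa [Submodule.ker_mkQ, inf_eq_right.2 hNL]

instance finite_powerSeries_quotient_X_pow (m : ℕ) :
    Module.Finite R (PowerSeries R ⧸ Ideal.span {(X : PowerSeries R) ^ m}) := by
  let π : Polynomial.degreeLT R m →ₗ[R]
      PowerSeries R ⧸ Ideal.span {(X : PowerSeries R) ^ m} :=
    (Ideal.Quotient.mkₐ R _).toLinearMap ∘ₗ (Polynomial.coeToPowerSeries.algHom R).toLinearMap ∘ₗ
      (Polynomial.degreeLT R m).subtype
  have : Module.Finite R (Polynomial.degreeLT R m) :=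
    Module.Finite.equiv (Polynomial.degreeLTEquiv R m).symm
  refine Module.Finite.of_surjective π fun q => ?_
  obtain ⟨p, rfl⟩ := Ideal.Quotient.mk_surjective q
  refine ⟨⟨p.trunc m, Polynomial.mem_degreeLT.2 (p.degree_trunc_lt m)⟩, ?_⟩
  refine Ideal.Quotient.eq.2 (Ideal.mem_span_singleton.2 (PowerSeries.X_pow_dvd_iff.2 ?_))
  intro k hk
  simp [Polynomial.coeToPowerSeries.algHom_apply, PowerSeries.coeff_trunc, hk]

lemma finite_quotient_X_pow_smul_top {B : Type*} [AddCommGroup B] [Module R B]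
    [Module (PowerSeries R) B] [IsScalarTower R (PowerSeries R) B] [Module.Finite (PowerSeries R) B]
    (m : ℕ) :
    Module.Finite R
      (B ⧸ Ideal.span {(X : PowerSeries R) ^ m} • (⊤ : Submodule (PowerSeries R) B)) :=
  Module.Finite.trans (PowerSeries R ⧸ Ideal.span {(X : PowerSeries R) ^ m}) _

lemma fg_of_projective_quotient {B : Type*} [AddCommGroup B] [Module (PowerSeries R) B]
    [Module.Finite (PowerSeries R) B] {L : Submodule (PowerSeries R) B} {m : ℕ}
    (hL : Ideal.span {(X : PowerSeries R) ^ m} • ⊤ ≤ L)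
    (hfin : Module.Finite R (RestrictScalars R (PowerSeries R) (B ⧸ L)))
    (hproj : Module.Projective R (RestrictScalars R (PowerSeries R) (B ⧸ L))) : L.FG := by
  let : Module R B := Module.compHom B (algebraMap R (PowerSeries R))
  have : IsScalarTower R (PowerSeries R) B := IsScalarTower.of_algebraMap_smul fun _ _ => rfl
  have : Module.Finite R (B ⧸ L) := hfin
  have : Module.Projective R (B ⧸ L) := hproj
  have := Module.finitePresentation_of_projective R (B ⧸ L)
  have := finite_quotient_X_pow_smul_top (R := R) (B := B) m
  refine fg_of_finite_quotient (R := R) hL ?_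
  exact Submodule.FG.smul (Submodule.fg_span_singleton _) Module.Finite.fg_top

lemma RankOne.exists_generatesAway {Q : Type*} [AddCommGroup Q] [Module R Q] (h : RankOne R Q)
    (P : Ideal R) [P.IsPrime] : ∃ f ∉ P, ∃ v : Q, GeneratesAway f v := by
  obtain ⟨_, _, hrank⟩ := h
  have : IsLocalRing (Localization P.primeCompl) :=
    inferInstanceAs (IsLocalRing (Localization.AtPrime P))
  have : Module.Free (Localization P.primeCompl) (LocalizedModule P.primeCompl Q) :=
    Module.free_of_flat_of_isLocalRing
  obtain ⟨w, -, hw⟩ := finrank_eq_one_iff'.1 (hrank P)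
  induction w with
  | _ v s =>
  have hsupp : (⟨P, ‹_›⟩ : PrimeSpectrum R) ∉ Module.support R (Q ⧸ Submodule.span R {v}) := by
    rw [Module.notMem_support_iff']
    intro x
    obtain ⟨x, rfl⟩ := Submodule.Quotient.mk_surjective _ x
    obtain ⟨c, hc⟩ := hw (LocalizedModule.mk x 1)
    induction c using Localization.induction_on with
    | _ c =>
    obtain ⟨u, hu⟩ := LocalizedModule.mk_eq.1 ((LocalizedModule.mk_smul_mk _ _ _ _).symm.trans hc)
    refine ⟨u * (c.2 * s), (u * (c.2 * s)).2, ?_⟩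
    rw [← Submodule.Quotient.mk_smul, Submodule.Quotient.mk_eq_zero,
      Submodule.mem_span_singleton]
    refine ⟨u * c.1, ?_⟩
    rw [one_smul] at hu
    rw [mul_smul, mul_smul]
    exact hu
  obtain ⟨f, hf, hfP⟩ := Set.not_subset.1 (mt Module.mem_support_iff_of_finite.2 hsupp)
  refine ⟨f, hfP, v, fun x => ?_⟩
  rw [← Submodule.Quotient.mk_eq_zero, Submodule.Quotient.mk_smul]
  exact Module.mem_annihilator.1 hf _

lemma GeneratesAway.mul_left {Q : Type*} [AddCommGroup Q] [Module R Q] {f : R} {v : Q}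
    (h : GeneratesAway f v) (a : R) : GeneratesAway (a * f) v := fun x => by
  rw [mul_smul]
  exact Submodule.smul_mem _ a (h x)

lemma span_generatesAway_eq_top {ι : Type*} [Finite ι] {Q : ι → Type*} [∀ t, AddCommGroup (Q t)]
    [∀ t, Module R (Q t)] (h : ∀ t, RankOne R (Q t)) :
    Ideal.span {f : R | ∀ t, ∃ v : Q t, GeneratesAway f v} = ⊤ := by
  classical
  have := Fintype.ofFinite ι
  by_contra hne
  obtain ⟨P, hP, hle⟩ := Ideal.exists_le_maximal _ hne
  have := hP.isPrime
  choose f hfP v hv using fun t => (h t).exists_generatesAway P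
  have hprod : ∏ t, f t ∈ P.primeCompl := Submonoid.prod_mem _ fun t _ => hfP t
  refine hprod (hle (Ideal.subset_span fun t => ⟨v t, ?_⟩))
  rw [← Finset.prod_erase_mul _ _ (Finset.mem_univ t)]
  exact (hv t).mul_left _

lemma coe_smul_mem_span_sup {A B : Type*} [Ring A] [AddCommGroup B] [Module A B]
    {N L : Submodule A B} {p : A} {w x : L}
    (h : p • (Submodule.Quotient.mk x : L ⧸ N.comap L.subtype) ∈
      Submodule.span A {Submodule.Quotient.mk w}) :
    p • (x : B) ∈ Submodule.span A {(w : B)} ⊔ N := by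
  obtain ⟨r, hr⟩ := Submodule.mem_span_singleton.1 h
  rw [← Submodule.Quotient.mk_smul, ← Submodule.Quotient.mk_smul, eq_comm,
    Submodule.Quotient.eq] at hr
  rw [← add_sub_cancel (r • (w : B)) (p • (x : B))]
  exact Submodule.add_mem_sup (Submodule.smul_mem _ _ (Submodule.mem_span_singleton_self _)) hr

end Algebra

section Laurent

open PowerSeries (X)

variable {R : Type*} [CommRing R]

lemma U_zero : U R 0 = 1 := rfl

lemma U_mul_U (a b : ℤ) : U R a * U R b = U R (a + b) := by
  simp [U]

lemma coeff_U_mul (a k : ℤ) (x : LaurentSeries R) : (U R a * x).coeff k = x.coeff (k - a) := by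
  simp [U, HahnSeries.coeff_single_mul]

lemma coe_powerSeries_mul (p : PowerSeries R) (x : LaurentSeries R) :
    (p : LaurentSeries R) * x = p • x :=
  (Algebra.smul_def p x).symm

lemma U_natCast_mul (m : ℕ) (x : LaurentSeries R) :
    U R m * x = (X : PowerSeries R) ^ m • x := by
  rw [← coe_powerSeries_mul, PowerSeries.coe_pow, PowerSeries.coe_X, HahnSeries.single_pow,
    one_pow, nsmul_one, U]

/-- The fractional ideal `u^a R[[u]]` of `R((u))`. -/
noncomputable def uIdeal (R : Type*) [CommRing R] (a : ℤ) :
    Submodule (PowerSeries R) (LaurentSeries R) :=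
  Submodule.span (PowerSeries R) {U R a}

lemma mem_uIdeal {a : ℤ} {x : LaurentSeries R} : x ∈ uIdeal R a ↔ ∀ k < a, x.coeff k = 0 := by
  rw [uIdeal, Submodule.mem_span_singleton]
  constructor
  · rintro ⟨p, rfl⟩ k hk
    rw [← coe_powerSeries_mul, mul_comm, coeff_U_mul, PowerSeries.coeff_coe, if_pos (by lia)]
  · intro hx
    refine ⟨PowerSeries.mk fun k => x.coeff (k + a), ?_⟩
    ext k
    rw [← coe_powerSeries_mul, mul_comm, coeff_U_mul, PowerSeries.coeff_coe]
    split_ifs with hk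
    · exact (hx k (by lia)).symm
    · rw [PowerSeries.coeff_mk, Int.natAbs_of_nonneg (by lia), sub_add_cancel]

lemma psRange_eq_uIdeal : psRange R = uIdeal R 0 := by
  rw [psRange, uIdeal, U_zero, LinearMap.range_eq_map, ← Ideal.span_singleton_one,
    Ideal.span, Submodule.map_span]
  simp

lemma uIdeal_antitone : Antitone (uIdeal R) := fun _ _ hab _ hx =>
  mem_uIdeal.2 fun k hk => mem_uIdeal.1 hx k (hk.trans_le hab)

lemma U_mul_mem_uIdeal {a b : ℤ} {x : LaurentSeries R} :
    U R a * x ∈ uIdeal R b ↔ x ∈ uIdeal R (b - a) := by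
  simp only [mem_uIdeal, coeff_U_mul]
  refine ⟨fun h k hk => ?_, fun h k hk => h _ (by lia)⟩
  simpa using h (k + a) (by lia)

end Laurent

section Lattice

open PowerSeries (X)

variable {R : Type*} [CommRing R] {n : ℕ}

lemma span_range_single_eq_pi {A ι : Type*} [Semiring A] [Finite ι] [DecidableEq ι]
    {M : ι → Type*} [∀ t, AddCommMonoid (M t)] [∀ t, Module A (M t)] (x : ∀ t, M t) :
    Submodule.span A (Set.range fun t => Pi.single t (x t)) =
      Submodule.pi Set.univ fun t => Submodule.span A {x t} := by
  rw [Submodule.span_range_eq_iSup, ← Submodule.iSup_map_single]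
  refine iSup_congr fun t => ?_
  rw [Submodule.map_span, Set.image_singleton, LinearMap.single_apply]

/-- The lattice `⊕ₜ u^{d t} R[[u]] eₜ` in `R((u))^n`. -/
noncomputable def diagLat (R : Type*) [CommRing R] {n : ℕ} (d : Fin n → ℤ) :
    Submodule (PowerSeries R) (V R n) :=
  Submodule.pi Set.univ fun t => uIdeal R (d t)

lemma mem_diagLat {d : Fin n → ℤ} {x : V R n} : x ∈ diagLat R d ↔ ∀ t, x t ∈ uIdeal R (d t) := by
  simp [diagLat]

lemma diagLat_eq_span (d : Fin n → ℤ) :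
    diagLat R d = Submodule.span (PowerSeries R) (Set.range fun t => Pi.single t (U R (d t))) :=
  (span_range_single_eq_pi _).symm

lemma stdChain_eq_diagLat (j : ℤ) : stdChain R n j = diagLat R fun t => -dex n j t := by
  rw [diagLat_eq_span, stdChain]
  congr! 3 with t
  ext s
  rw [Pi.single_apply]

lemma stdLat_eq_diagLat : stdLat R n = diagLat R 0 := by
  rw [stdLat, psRange_eq_uIdeal]
  rfl

lemma fg_diagLat (d : Fin n → ℤ) : (diagLat R d).FG := by
  rw [diagLat_eq_span]
  exact Submodule.fg_span (Set.finite_range _)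

lemma U_smul_U_smul (a b : ℤ) (x : V R n) : U R a • U R b • x = U R (a + b) • x := by
  rw [smul_smul, U_mul_U]

lemma U_natCast_smul (m : ℕ) (x : V R n) : U R m • x = (X : PowerSeries R) ^ m • x :=
  funext fun t => U_natCast_mul m (x t)

lemma mem_scaleL {a : ℤ} {L : Submodule (PowerSeries R) (V R n)} {x : V R n} :
    x ∈ scaleL R n (U R a) L ↔ U R (-a) • x ∈ L := by
  constructor
  · rintro ⟨y, hy, rfl⟩
    change U R (-a) • U R a • y ∈ L
    rwa [U_smul_U_smul, neg_add_cancel, U_zero, one_smul]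
  · intro hx
    refine ⟨_, hx, ?_⟩
    change U R a • U R (-a) • x = x
    rw [U_smul_U_smul, add_neg_cancel, U_zero, one_smul]

lemma scaleL_stdLat (a : ℤ) : scaleL R n (U R a) (stdLat R n) = diagLat R fun _ => a := by
  ext x
  simp only [mem_scaleL, stdLat_eq_diagLat, mem_diagLat, Pi.smul_apply, smul_eq_mul,
    U_mul_mem_uIdeal, Pi.zero_apply, zero_sub, neg_neg]

lemma IsLattice.fg {L : Submodule (PowerSeries R) (V R n)} (h : IsLattice R n L) : L.FG := by
  obtain ⟨N, hNL, hLN, hfin, hproj⟩ := h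
  rw [scaleL_stdLat] at *
  have : Module.Finite (PowerSeries R) (diagLat R fun _ : Fin n => -(N : ℤ)) :=
    Module.Finite.iff_fg.2 (fg_diagLat _)
  have hX : Ideal.span {(X : PowerSeries R) ^ (2 * N)} • ⊤ ≤
      L.comap (diagLat R fun _ : Fin n => -(N : ℤ)).subtype := by
    rw [Submodule.ideal_span_singleton_smul]
    rintro _ ⟨⟨b, hb⟩, -, rfl⟩
    refine hNL (mem_diagLat.2 fun t => ?_)
    change (X : PowerSeries R) ^ (2 * N) • b t ∈ _
    rw [← U_natCast_mul, U_mul_mem_uIdeal]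
    convert mem_diagLat.1 hb t using 2
    push_cast
    ring
  have hfg := (fg_of_projective_quotient hX hfin hproj).map (Submodule.subtype _)
  rwa [Submodule.map_comap_subtype, inf_eq_right.2 hLN] at hfg

end Lattice

section Exponents

variable {n : ℕ}

lemma dex_le_iff {j a : ℤ} {t : Fin n} : dex n j t ≤ a ↔ j ≤ a * n + t := by
  rw [dex, Int.add_one_le_iff, Int.ediv_lt_iff_lt_mul (Int.natCast_pos.2 t.pos)]
  lia

lemma dex_eq_iff {j a : ℤ} {t : Fin n} : dex n j t = a ↔ j ≤ a * n + t ∧ a * n + t < j + n := by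
  have hlt : ¬ dex n j t ≤ a - 1 ↔ a * n + t < j + n := by
    rw [dex_le_iff, sub_one_mul]
    lia
  rw [← dex_le_iff, ← hlt]
  lia

lemma mul_add_mem_Ico_iff {i q : ℤ} {t : Fin n} :
    q * n + t ∈ Set.Ico (i - n) i ↔ q = dex n i t - 1 := by
  rw [eq_sub_iff_add_eq, eq_comm, dex_eq_iff, Set.mem_Ico, add_mul]
  lia

lemma dex_natCast {k : ℕ} (hk : k ≤ n) (t : Fin n) : dex n k t = if (t : ℕ) < k then 1 else 0 := by
  have := t.2
  rw [dex_eq_iff]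
  split_ifs <;> lia

lemma dex_sub_dex_le (j : ℤ) (s t : Fin n) : dex n j t - dex n j s ≤ dex n s t := by
  have hjs : j ≤ dex n j s * n + s := dex_le_iff.1 le_rfl
  have hst : s ≤ dex n s t * n + t := dex_le_iff.1 le_rfl
  rw [sub_le_iff_le_add, dex_le_iff, add_mul]
  lia

end Exponents

section MatrixAction

lemma exists_GL_col_eq {ι K : Type*} [Fintype ι] [DecidableEq ι] [CommRing K] {w : ι → ι → K}
    (hw : Submodule.span K (Set.range w) = ⊤) :
    ∃ g : GL ι K, g.1.col = w := by
  have hunit : IsUnit (Matrix.of w).transpose := by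
    rw [← Matrix.mulVec_surjective_iff_isUnit]
    exact LinearMap.range_eq_top.1 ((Matrix.range_mulVecLin _).trans hw)
  exact ⟨hunit.unit, rfl⟩

variable {R : Type*} [CommRing R] {n : ℕ}

lemma glLat_diagLat (g : GL (Fin n) (LaurentSeries R)) (d : Fin n → ℤ) :
    glLat R n g (diagLat R d) = Submodule.span (PowerSeries R)
      (Set.range fun t => U R (d t) • g.1.col t) := by
  rw [diagLat_eq_span, glLat, Submodule.map_span, ← Set.range_comp]
  congr! 3 with t
  exact (Matrix.mulVec_single g.1 t _).trans (op_smul_eq_smul _ (g.1.col t))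

end MatrixAction

section Stabilizer

variable {R : Type*} [CommRing R] {n : ℕ}

lemma glLat_one (L : Submodule (PowerSeries R) (V R n)) : glLat R n 1 L = L := by
  ext x
  simp [glLat]

lemma glLat_mul (g h : GL (Fin n) (LaurentSeries R)) (L : Submodule (PowerSeries R) (V R n)) :
    glLat R n (g * h) L = glLat R n g (glLat R n h L) := by
  rw [glLat, glLat, glLat, ← Submodule.map_comp]
  exact congrArg L.map (LinearMap.ext fun x => (Matrix.mulVec_mulVec x g.1 h.1).symm)

lemma glLat_mono (g : GL (Fin n) (LaurentSeries R)) : Monotone (glLat R n g) :=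
  fun _ _ h => Submodule.map_mono h

lemma glLat_eq_self_iff {g : GL (Fin n) (LaurentSeries R)}
    {L : Submodule (PowerSeries R) (V R n)} :
    glLat R n g L = L ↔ glLat R n g L ≤ L ∧ glLat R n g⁻¹ L ≤ L := by
  have hinv : glLat R n g (glLat R n g⁻¹ L) = L := by
    rw [← glLat_mul, mul_inv_cancel, glLat_one]
  have hinv' : glLat R n g⁻¹ (glLat R n g L) = L := by
    rw [← glLat_mul, inv_mul_cancel, glLat_one]
  constructor
  · intro h
    refine ⟨h.le, ?_⟩
    nth_rw 1 [← h]
    exact hinv'.le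
  · rintro ⟨hg, hg'⟩
    exact hg.antisymm (hinv.ge.trans (glLat_mono g hg'))

lemma glLat_diagLat_le_iff {g : GL (Fin n) (LaurentSeries R)} {d d' : Fin n → ℤ} :
    glLat R n g (diagLat R d) ≤ diagLat R d' ↔
      ∀ s t, g.1 s t ∈ uIdeal R (d' s - d t) := by
  rw [glLat_diagLat, Submodule.span_le, Set.range_subset_iff, forall_comm]
  simp only [SetLike.mem_coe, mem_diagLat, Pi.smul_apply, smul_eq_mul, U_mul_mem_uIdeal,
    Matrix.col_apply]

lemma forall_glLat_stdChain_le_iff {g : GL (Fin n) (LaurentSeries R)} :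
    (∀ j, glLat R n g (stdChain R n j) ≤ stdChain R n j) ↔
      ∀ s t : Fin n, g.1 s t ∈ uIdeal R (dex n s t) := by
  simp only [stdChain_eq_diagLat, glLat_diagLat_le_iff, neg_sub_neg]
  refine ⟨fun h s t => ?_, fun h j s t => uIdeal_antitone (dex_sub_dex_le j s t) (h s t)⟩
  simpa [dex_natCast s.2.le] using h s s t

lemma mem_uIdeal_dex_iff {s t : Fin n} {x : LaurentSeries R} :
    x ∈ uIdeal R (dex n s t) ↔ x ∈ psRange R ∧ (t < s → x.coeff 0 = 0) := by
  rw [dex_natCast s.2.le, psRange_eq_uIdeal]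
  simp only [mem_uIdeal]
  split_ifs with hts
  · refine ⟨fun h => ⟨fun k hk => h k (by lia), fun _ => h 0 one_pos⟩, fun h k hk => ?_⟩
    obtain hk | rfl : k < 0 ∨ k = 0 := by lia
    exacts [h.1 k hk, h.2 hts]
  · exact ⟨fun h => ⟨h, fun hts' => absurd hts' hts⟩, And.left⟩

lemma exists_map_eq_of_mem_psRange {g : Matrix (Fin n) (Fin n) (LaurentSeries R)}
    (hg : ∀ a b, g a b ∈ psRange R) :
    ∃ G : Matrix (Fin n) (Fin n) (PowerSeries R), G.map (HahnSeries.ofPowerSeries ℤ R) = g := by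
  choose G hG using hg
  exact ⟨Matrix.of G, Matrix.ext hG⟩

lemma coeff_zero_ofPowerSeries (p : PowerSeries R) :
    (HahnSeries.ofPowerSeries ℤ R p).coeff 0 = PowerSeries.constantCoeff p := by
  rw [PowerSeries.coeff_coe]
  simp

lemma blockTriangular_of_mul_eq_one {ι A : Type*} [Fintype ι] [LinearOrder ι] [CommRing A]
    {M N : Matrix ι ι A} (hM : M.BlockTriangular id) (hMN : M * N = 1) : N.BlockTriangular id := by
  have := invertibleOfRightInverse M N hMN
  rw [← Matrix.inv_eq_right_inv hMN]
  exact Matrix.blockTriangular_inv_of_blockTriangular hM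

lemma coeff_zero_inv_eq_zero {g : GL (Fin n) (LaurentSeries R)} (hg : ∀ a b, g.1 a b ∈ psRange R)
    (hg' : ∀ a b, g⁻¹.1 a b ∈ psRange R) (htri : ∀ a b, b < a → (g.1 a b).coeff 0 = 0)
    (a b : Fin n) (hba : b < a) : (g⁻¹.1 a b).coeff 0 = 0 := by
  obtain ⟨G, hG⟩ := exists_map_eq_of_mem_psRange hg
  obtain ⟨H, hH⟩ := exists_map_eq_of_mem_psRange hg'
  have hGH : G * H = 1 := by
    apply Matrix.map_injective (HahnSeries.ofPowerSeries_injective (Γ := ℤ) (R := R))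
    dsimp only
    rw [Matrix.map_mul, hG, hH, Matrix.map_one _ (map_zero _) (map_one _)]
    exact g.mul_inv
  have hred : G.map PowerSeries.constantCoeff * H.map PowerSeries.constantCoeff = 1 := by
    rw [← Matrix.map_mul, hGH, Matrix.map_one _ (map_zero _) (map_one _)]
  simp only [← hG, ← hH, Matrix.map_apply, coeff_zero_ofPowerSeries] at htri ⊢
  exact blockTriangular_of_mul_eq_one (fun a b hba => htri a b hba) hred hba

theorem forall_glLat_stdChain_eq_iff {g : GL (Fin n) (LaurentSeries R)} :
    (∀ i, glLat R n g (stdChain R n i) = stdChain R n i) ↔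
      (∀ a b, g.1 a b ∈ psRange R) ∧
      (∀ a b, g⁻¹.1 a b ∈ psRange R) ∧
      ∀ a b, b < a → (g.1 a b).coeff 0 = 0 := by
  simp only [glLat_eq_self_iff, forall_and, forall_glLat_stdChain_le_iff, mem_uIdeal_dex_iff]
  constructor
  · rintro ⟨⟨hg, htri⟩, hg', -⟩
    exact ⟨hg, hg', htri⟩
  · rintro ⟨hg, hg', htri⟩
    exact ⟨⟨hg, htri⟩, hg', coeff_zero_inv_eq_zero hg hg' htri⟩

end Stabilizer

section Chain

open PowerSeries (X)

lemma X_mem_jacobson_bot {R : Type*} [CommRing R] :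
    (X : PowerSeries R) ∈ (⊥ : Ideal (PowerSeries R)).jacobson := by
  simp [Ideal.mem_jacobson_bot, PowerSeries.isUnit_iff_constantCoeff]

lemma eq_of_eq_sup_X_smul {R B : Type*} [CommRing R] [AddCommGroup B] [Module (PowerSeries R) B]
    {N N' : Submodule (PowerSeries R) B} (hN : N.FG)
    (h : N = N' ⊔ Ideal.span {(X : PowerSeries R)} • N) : N = N' :=
  le_antisymm
    (Submodule.le_of_le_smul_of_le_jacobson_bot hN
      ((Ideal.span_singleton_le_iff_mem _).2 X_mem_jacobson_bot) h.le)
    (le_sup_left.trans h.ge)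

lemma eq_span_image_Ico_sup {A B : Type*} [Semiring A] [AddCommMonoid B] [Module A B]
    {M : ℤ → Submodule A B} {w : ℤ → B} (h : ∀ j, M (j + 1) = Submodule.span A {w j} ⊔ M j)
    (i : ℤ) (k : ℕ) : M (i + k) = Submodule.span A (w '' Set.Ico i (i + k)) ⊔ M i := by
  induction k with
  | zero => simp
  | succ k ih =>
    have hIco : Set.Ico i (i + (k + 1 : ℕ)) = insert (i + k) (Set.Ico i (i + k)) := by
      ext j
      simp only [Set.mem_Ico, Set.mem_insert_iff]
      lia
    rw [hIco, Set.image_insert_eq, Submodule.span_insert, sup_assoc, ← ih, ← h, Nat.cast_succ,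
      add_assoc]

variable {R : Type*} [CommRing R] {n : ℕ}

lemma scaleL_zero (L : Submodule (PowerSeries R) (V R n)) : scaleL R n (U R 0) L = L := by
  ext x
  rw [mem_scaleL, neg_zero, U_zero, one_smul]

lemma scaleL_scaleL (a b : ℤ) (L : Submodule (PowerSeries R) (V R n)) :
    scaleL R n (U R a) (scaleL R n (U R b) L) = scaleL R n (U R (a + b)) L := by
  ext x
  rw [mem_scaleL, mem_scaleL, mem_scaleL, U_smul_U_smul, neg_add_rev]

lemma scaleL_one (L : Submodule (PowerSeries R) (V R n)) :
    scaleL R n (U R 1) L = Ideal.span {(X : PowerSeries R)} • L := by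
  rw [Submodule.ideal_span_singleton_smul]
  refine congrArg L.map (LinearMap.ext fun x => ?_)
  exact (U_natCast_smul 1 x).trans (by rw [pow_one]; rfl)

lemma periodic_zsmul_add {M : ℤ → Submodule (PowerSeries R) (V R n)}
    (hM : ∀ i, M (n + i) = scaleL R n (U R (-1)) (M i)) (q i : ℤ) :
    M (q * n + i) = scaleL R n (U R (-q)) (M i) := by
  induction q with
  | zero => rw [zero_mul, zero_add, neg_zero, scaleL_zero]
  | succ q ih => rw [show (q + 1) * (n : ℤ) + i = n + (q * n + i) by ring, hM, ih, scaleL_scaleL,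
      neg_add_rev]
  | pred q ih =>
    rw [show -(q : ℤ) * n + i = n + ((-q - 1) * n + i) by ring, hM] at ih
    have := congrArg (scaleL R n (U R 1)) ih
    rw [scaleL_scaleL, scaleL_scaleL, add_neg_cancel, scaleL_zero] at this
    rw [this]
    congr 2
    ring

lemma span_range_eq_top_of_diagLat_le {N : ℤ} {w : Fin n → V R n}
    (h : diagLat R (fun _ => N) ≤ Submodule.span (PowerSeries R) (Set.range w)) :
    Submodule.span (LaurentSeries R) (Set.range w) = ⊤ := by
  rw [eq_top_iff, ← (Pi.basisFun (LaurentSeries R) (Fin n)).span_eq, Submodule.span_le]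
  rintro _ ⟨t, rfl⟩
  have hmem : (Pi.single t (U R N) : V R n) ∈ Submodule.span (LaurentSeries R) (Set.range w) :=
    Submodule.span_le_restrictScalars (PowerSeries R) _ _
      (h ((diagLat_eq_span _).ge (Submodule.subset_span ⟨t, rfl⟩)))
  have hsmul : Pi.basisFun (LaurentSeries R) (Fin n) t = U R (-N) • Pi.single t (U R N) := by
    rw [← Pi.single_smul, smul_eq_mul, U_mul_U, neg_add_cancel, U_zero, Pi.basisFun_apply]
  rw [hsmul]
  exact Submodule.smul_mem _ _ hmem

variable [NeZero n]

/-- The family `w : ℤ → R((u))^n` extending `v : Fin n → R((u))^n` by the rule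
`w (q * n + t) = u^(-q) * v t`. -/
noncomputable def periodicExtension (v : Fin n → V R n) (j : ℤ) : V R n :=
  U R (-(Int.divModEquiv n j).1) • v (Int.divModEquiv n j).2

lemma periodicExtension_mul_add (v : Fin n → V R n) (q : ℤ) (t : Fin n) :
    periodicExtension v (q * n + t) = U R (-q) • v t := by
  have h : Int.divModEquiv n (q * n + t) = (q, t) := (Int.divModEquiv n).apply_symm_apply (q, t)
  rw [periodicExtension, h]

lemma exists_eq_mul_add (n : ℕ) [NeZero n] (j : ℤ) : ∃ (q : ℤ) (t : Fin n), j = q * n + t :=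
  ⟨_, _, ((Int.divModEquiv n).symm_apply_apply j).symm⟩

lemma periodicExtension_image_Ico (v : Fin n → V R n) (i : ℤ) :
    periodicExtension v '' Set.Ico (i - n) i =
      Set.range fun t => U R (-dex n i t) • U R 1 • v t := by
  ext x
  constructor
  · rintro ⟨j, hj, rfl⟩
    obtain ⟨q, t, rfl⟩ := exists_eq_mul_add n j
    refine ⟨t, ?_⟩
    rw [mul_add_mem_Ico_iff] at hj
    rw [periodicExtension_mul_add, hj]
    dsimp only
    rw [U_smul_U_smul, neg_sub, sub_eq_neg_add]
  · rintro ⟨t, rfl⟩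
    refine ⟨(dex n i t - 1) * n + t, mul_add_mem_Ico_iff.2 rfl, ?_⟩
    dsimp only
    rw [periodicExtension_mul_add, U_smul_U_smul, neg_sub, sub_eq_neg_add]

lemma eq_span_singleton_sup_of_periodic {M : ℤ → Submodule (PowerSeries R) (V R n)}
    (hM : ∀ i, M (n + i) = scaleL R n (U R (-1)) (M i)) {v : Fin n → V R n}
    (hv : ∀ t : Fin n, M (t + 1) = Submodule.span (PowerSeries R) {v t} ⊔ M t) (j : ℤ) :
    M (j + 1) = Submodule.span (PowerSeries R) {periodicExtension v j} ⊔ M j := by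
  obtain ⟨q, t, rfl⟩ := exists_eq_mul_add n j
  rw [add_assoc, periodic_zsmul_add hM, periodic_zsmul_add hM, hv, periodicExtension_mul_add,
    scaleL, Submodule.map_sup, Submodule.map_span, Set.image_singleton]
  rfl

lemma eq_span_range_of_periodic {M : ℤ → Submodule (PowerSeries R) (V R n)}
    (hM : ∀ i, M (n + i) = scaleL R n (U R (-1)) (M i)) (hfg : ∀ i, (M i).FG) {v : Fin n → V R n}
    (hv : ∀ t : Fin n, M (t + 1) = Submodule.span (PowerSeries R) {v t} ⊔ M t) (i : ℤ) :
    M i = Submodule.span (PowerSeries R)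
      (Set.range fun t => U R (-dex n i t) • U R 1 • v t) := by
  have htel := eq_span_image_Ico_sup (eq_span_singleton_sup_of_periodic hM hv) (i - n) n
  have hX : M (i - n) = scaleL R n (U R 1) (M i) := by
    rw [show i - n = -1 * n + i by ring, periodic_zsmul_add hM, neg_neg]
  rw [sub_add_cancel, periodicExtension_image_Ico, hX, scaleL_one] at htel
  exact eq_of_eq_sup_X_smul (hfg i) htel

theorem exists_glLat_stdChain_eq {M : ℤ → Submodule (PowerSeries R) (V R n)}
    (hM : ∀ i, M (n + i) = scaleL R n (U R (-1)) (M i)) (hfg : ∀ i, (M i).FG) {v : Fin n → V R n}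
    (hv : ∀ t : Fin n, M (t + 1) = Submodule.span (PowerSeries R) {v t} ⊔ M t)
    {N : ℤ} (hN : diagLat R (fun _ => N) ≤ M 0) :
    ∃ g : GL (Fin n) (LaurentSeries R), ∀ i, M i = glLat R n g (stdChain R n i) := by
  have hspan := eq_span_range_of_periodic hM hfg hv
  have hdex (t : Fin n) : dex n 0 t = 0 := by simpa using dex_natCast n.zero_le t
  have hspan_zero := hspan 0
  simp only [hdex, neg_zero, U_zero, one_smul] at hspan_zero
  obtain ⟨g, hg⟩ := exists_GL_col_eq (span_range_eq_top_of_diagLat_le (hN.trans hspan_zero.le))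
  refine ⟨g, fun i => ?_⟩
  rw [hspan, stdChain_eq_diagLat, glLat_diagLat, hg]

end Chain

section BaseChange

variable {R S : Type*} [CommRing R] [CommRing S] (f : R →+* S) {n : ℕ}

lemma lsMap_zero : lsMap R f 0 = 0 :=
  HahnSeries.ext (funext fun _ => map_zero f)

lemma lsMap_add (x y : LaurentSeries R) : lsMap R f (x + y) = lsMap R f x + lsMap R f y :=
  HahnSeries.ext (funext fun _ => map_add f _ _)

lemma lsMap_mul (x y : LaurentSeries R) : lsMap R f (x * y) = lsMap R f x * lsMap R f y :=
  HahnSeries.map_mul (f : R →ₙ+* S)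

lemma lsMap_U (a : ℤ) : lsMap R f (U R a) = U S a :=
  (HahnSeries.map_single (f : R →+ S).toZeroHom).trans (congrArg _ (map_one f))

lemma lsMap_smul (p : PowerSeries R) (x : LaurentSeries R) :
    lsMap R f (p • x) = PowerSeries.map f p • lsMap R f x := by
  have hp : lsMap R f p = PowerSeries.map f p := by
    ext k
    change f ((p : LaurentSeries R).coeff k) = _
    rw [PowerSeries.coeff_coe, PowerSeries.coeff_coe, apply_ite f, map_zero, PowerSeries.coeff_map]
  rw [← coe_powerSeries_mul, ← coe_powerSeries_mul, lsMap_mul, hp]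

/-- The coefficientwise map `R((u))^n → S((u))^n` along `f : R → S`, as a map semilinear over
`R[[u]] → S[[u]]`. -/
def mapV (n : ℕ) : V R n →ₛₗ[PowerSeries.map f] V S n where
  toFun x t := lsMap R f (x t)
  map_add' x y := funext fun t => lsMap_add f (x t) (y t)
  map_smul' p x := funext fun t => lsMap_smul f p (x t)

lemma mapV_U_smul (a : ℤ) (x : V R n) : mapV f n (U R a • x) = U S a • mapV f n x :=
  funext fun t => (lsMap_mul f _ (x t)).trans (congrArg (· * _) (lsMap_U f a))

/-- The `S[[u]]`-submodule of `S((u))^n` generated by the image of `L ⊆ R((u))^n` along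
`f : R → S`. -/
noncomputable def baseChange (L : Submodule (PowerSeries R) (V R n)) :
    Submodule (PowerSeries S) (V S n) :=
  Submodule.span (PowerSeries S) (mapV f n '' L)

lemma baseChange_span (T : Set (V R n)) :
    baseChange f (Submodule.span (PowerSeries R) T) =
      Submodule.span (PowerSeries S) (mapV f n '' T) :=
  le_antisymm (Submodule.span_le.2 (Submodule.image_span_subset_span _ _))
    (Submodule.span_mono (Set.image_mono Submodule.subset_span))

lemma baseChange_sup (L L' : Submodule (PowerSeries R) (V R n)) :
    baseChange f (L ⊔ L') = baseChange f L ⊔ baseChange f L' := by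
  rw [← Submodule.span_eq L, ← Submodule.span_eq L', ← Submodule.span_union,
    baseChange_span, Set.image_union, Submodule.span_union, baseChange_span, baseChange_span]

lemma baseChange_mono : Monotone (baseChange f (n := n)) := fun _ _ h =>
  Submodule.span_mono (Set.image_mono h)

lemma fg_baseChange {L : Submodule (PowerSeries R) (V R n)} (h : L.FG) : (baseChange f L).FG := by
  obtain ⟨T, hT, rfl⟩ := Submodule.fg_def.1 h
  rw [baseChange_span]
  exact Submodule.fg_span (hT.image _)

lemma baseChange_scaleL (a : ℤ) (L : Submodule (PowerSeries R) (V R n)) :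
    baseChange f (scaleL R n (U R a) L) = scaleL S n (U S a) (baseChange f L) := by
  rw [baseChange, baseChange, scaleL, scaleL, Submodule.map_span, Submodule.map_coe,
    Set.image_image, Set.image_image]
  exact congrArg _ (Set.image_congr fun x _ => mapV_U_smul f a x)

lemma baseChange_diagLat (d : Fin n → ℤ) : baseChange f (diagLat R d) = diagLat S d := by
  have hsingle (t : Fin n) (x : LaurentSeries R) :
      mapV f n (Pi.single t x) = Pi.single t (lsMap R f x) :=
    funext fun s => Pi.apply_single (fun _ => lsMap R f) (fun _ => lsMap_zero f) t x s
  rw [diagLat_eq_span, baseChange_span, diagLat_eq_span, ← Set.range_comp]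
  simp only [Function.comp_def, hsingle, lsMap_U]

lemma baseChange_le_of_smul_mem {L L' : Submodule (PowerSeries R) (V R n)} {p : PowerSeries R}
    (hp : IsUnit (PowerSeries.map f p)) (h : ∀ x ∈ L, p • x ∈ L') :
    baseChange f L ≤ baseChange f L' := by
  refine Submodule.span_le.2 ?_
  rintro _ ⟨x, hx, rfl⟩
  rw [SetLike.mem_coe, ← Submodule.smul_mem_iff_of_isUnit _ hp, ← map_smulₛₗ]
  exact Submodule.subset_span ⟨_, h x hx, rfl⟩

end BaseChange

section LocalTriviality

open PowerSeries (C)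

variable {R : Type*} [CommRing R] {n : ℕ}

/-- Each of the quotients `L (t + 1) / L t` with `0 ≤ t < n` is generated by one element after
inverting `a`, with `a` itself as a common denominator. -/
def TrivializesQuotients (L : ℤ → Submodule (PowerSeries R) (V R n)) (a : R) : Prop :=
  ∀ t : Fin n, ∃ v ∈ L (t + 1), ∀ x ∈ L (t + 1), C a • x ∈ Submodule.span (PowerSeries R) {v} ⊔ L t

lemma IsLatticeChain.span_trivializesQuotients_eq_top
    {L : ℤ → Submodule (PowerSeries R) (V R n)} (hL : IsLatticeChain R n L) :
    Ideal.span {a | TrivializesQuotients L a} = ⊤ := by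
  let (t : Fin n) : Module R (subQuot R n (L t) (L (t + 1))) :=
    Module.compHom _ (algebraMap R (PowerSeries R))
  have hrank (t : Fin n) : RankOne R (subQuot R n (L t) (L (t + 1))) := hL.2.2.1 t
  refine top_unique ((span_generatesAway_eq_top hrank).ge.trans
    (Ideal.span_mono fun a ha t => ?_))
  obtain ⟨v, hv⟩ := ha t
  obtain ⟨w, rfl⟩ := Submodule.Quotient.mk_surjective _ v
  refine ⟨w, w.2, fun x hx => coe_smul_mem_span_sup (x := ⟨x, hx⟩) ?_⟩
  obtain ⟨r, hr⟩ := Submodule.mem_span_singleton.1 (hv (Submodule.Quotient.mk ⟨x, hx⟩))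
  exact Submodule.mem_span_singleton.2 ⟨C r, hr⟩

theorem IsLatticeChain.exists_baseChange_eq_glLat_stdChain [NeZero n] {S : Type*} [CommRing S]
    (f : R →+* S) {L : ℤ → Submodule (PowerSeries R) (V R n)} (hL : IsLatticeChain R n L) {a : R}
    (ha : TrivializesQuotients L a) (hfa : IsUnit (f a)) :
    ∃ g : GL (Fin n) (LaurentSeries S),
      ∀ i, baseChange f (L i) = glLat S n g (stdChain S n i) := by
  choose v hvL hv using ha
  obtain ⟨hlat, hmono, -, hper⟩ := hL
  obtain ⟨N, hN, -⟩ := hlat 0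
  have hunit : IsUnit (PowerSeries.map f (C a)) := by
    rwa [PowerSeries.isUnit_iff_constantCoeff, PowerSeries.map_C, PowerSeries.constantCoeff_C]
  refine exists_glLat_stdChain_eq (v := fun t => mapV f n (v t)) (N := N)
    (fun i => ?_) (fun i => fg_baseChange f (hlat i).fg) (fun t => ?_) ?_
  · rw [hper, baseChange_scaleL]
  · have hstep : baseChange f (L (t + 1)) =
        baseChange f (Submodule.span (PowerSeries R) {v t} ⊔ L t) :=
      (baseChange_le_of_smul_mem f hunit (hv t)).antisymm (baseChange_mono f
        (sup_le ((Submodule.span_singleton_le_iff_mem _ _).2 (hvL t)) (hmono t)))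
    rw [hstep, baseChange_sup, baseChange_span, Set.image_singleton]
  · rw [← baseChange_diagLat f, ← scaleL_stdLat]
    exact baseChange_mono f hN

end LocalTriviality

end Pap

open Pap in
/-- Every complete periodic lattice chain is, Zariski-locally on `R`, a `GL_n(R((u)))`-translate of
the standard lattice chain; and the stabilizer of the standard chain is the preimage of the upper
triangular matrices under the reduction `GL_n(R[[u]]) → GL_n(R)`, `u ↦ 0`. -/
theorem stmt6 (R : Type*) [CommRing R] (n : ℕ) (hn : 1 ≤ n)
    (L : ℤ → Submodule (PowerSeries R) (V R n)) (hL : IsLatticeChain R n L) :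
    (∃ (m : ℕ) (fs : Fin m → R), Ideal.span (Set.range fs) = ⊤ ∧
      ∀ j : Fin m, ∃ g : GL (Fin n) (LaurentSeries (Localization.Away (fs j))),
        ∀ i : ℤ,
          Submodule.span (PowerSeries (Localization.Away (fs j)))
            ((fun x : V R n => fun t =>
                lsMap R (algebraMap R (Localization.Away (fs j))) (x t)) ''
              (L i : Set (V R n)))
            = glLat (Localization.Away (fs j)) n g
                (stdChain (Localization.Away (fs j)) n i)) ∧
    (∀ g : GL (Fin n) (LaurentSeries R),
      (∀ i : ℤ, glLat R n g (stdChain R n i) = stdChain R n i) ↔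
        ((∀ a b : Fin n,
            ((g : Matrix (Fin n) (Fin n) (LaurentSeries R)) a b) ∈ psRange R) ∧
         (∀ a b : Fin n,
            ((↑(g⁻¹) : Matrix (Fin n) (Fin n) (LaurentSeries R)) a b) ∈ psRange R) ∧
         (∀ a b : Fin n, b < a →
            ((g : Matrix (Fin n) (Fin n) (LaurentSeries R)) a b).coeff 0 = 0))) := by
  refine ⟨?_, fun g => forall_glLat_stdChain_eq_iff⟩
  have : NeZero n := ⟨by lia⟩
  obtain ⟨T, hT, hspan⟩ :=
    (Ideal.span_eq_top_iff_finite _).1 hL.span_trivializesQuotients_eq_top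
  refine ⟨T.card, fun j => T.equivFin.symm j, ?_, fun j => ?_⟩
  · rwa [← Function.comp_def Subtype.val, T.equivFin.symm.surjective.range_comp, Subtype.range_coe]
  · exact hL.exists_baseChange_eq_glLat_stdChain _ (hT (T.equivFin.symm j).2)
      (IsLocalization.Away.algebraMap_isUnit _)
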